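/- Let A be a separated cocomplete V-category and g : A → V a map satisfying A(x,x') ≤ [g(x'), g(x)] for all x,x' and g(sup_A φ) = ⨅_x [φ(x), g(x)] for all φ ∈ DA (i.e. a cocontinuous V-functor A → V^op). Set a_g := sup_A(x ↦ ⨆_a g(a) ⊗ A(x,a)). Then e ≤ g(a_g), and a_g equals the tensor of a_g by g(a_g): a_g = sup_A(x ↦ g(a_g) ⊗ A(x, a_g)). -/

import Mathlib

/-!
Write `s = sup χ` and `t = sup χ'`. Functoriality of `g` gives `χ x ≤ g x` for all `x`, which
by cocontinuity is exactly `1 ≤ g s`. For `s = t`, separatedness leaves two inequalities, both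
consequences of the universal property of `sup` (`one_le_hom_sup_iff`, `le_hom_sup`): on the one
hand `1 ≤ g s * A(s, s) = χ' s ≤ A(s, t)`; on the other hand `χ' ≤ χ` pointwise, `χ' x` being
the term `a = s` of the supremum `χ x`, so that `χ' x ≤ A(x, s)` and `1 ≤ A(t, s)`.
-/

/- `V` is a commutative quantale: a complete lattice with a commutative monoid
structure `(*, 1)` distributing over arbitrary suprema. -/
variable {V : Type*} [CommMonoid V] [CompleteLattice V] [IsQuantale V]

/-- The internal hom `[v,w]` of the commutative quantale `V`. -/
def qhom (v w : V) : V := sSup {u | u * v ≤ w}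

/-- A separated cocomplete `V`-category: a `V`-category whose underlying order is
antisymmetric, equipped with `sup : DA → A` satisfying
`A(sup φ, a) = ⨅ a', [φ(a'), A(a',a)]`. -/
structure SupCat (V : Type*) [CommMonoid V] [CompleteLattice V] [IsQuantale V] where
  carrier : Type*
  hom : carrier → carrier → V
  refl : ∀ x, 1 ≤ hom x x
  trans : ∀ x y z, hom x y * hom y z ≤ hom x z
  separated : ∀ x y, 1 ≤ hom x y → 1 ≤ hom y x → x = y
  sup : {φ : carrier → V // ∀ x y, hom x y * φ y ≤ φ x} → carrier
  hom_sup : ∀ (φ : {φ : carrier → V // ∀ x y, hom x y * φ y ≤ φ x}) (a : carrier),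
      hom (sup φ) a = ⨅ a', qhom (φ.1 a') (hom a' a)

/-- The set of contravariant presheaves on a separated cocomplete `V`-category. -/
abbrev PSh (A : SupCat V) := {φ : A.carrier → V // ∀ x y, A.hom x y * φ y ≤ φ x}

/-- A cocontinuous `V`-functor `g : A → V^op`:
`A(x,x') ≤ [g(x'), g(x)]` and `g(sup_A φ) = ⨅_x [φ(x), g(x)]`. -/
def GaloisForm (A : SupCat V) (g : A.carrier → V) : Prop :=
  (∀ x x', A.hom x x' ≤ qhom (g x') (g x)) ∧
  (∀ φ : PSh A, g (A.sup φ) = ⨅ x, qhom (φ.1 x) (g x))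

/-- The tensor–hom adjunction of the quantale. -/
theorem le_qhom_iff {u v w : V} : u ≤ qhom v w ↔ u * v ≤ w := by
  constructor
  · intro h
    refine (mul_le_mul_left h v).trans ?_
    rw [qhom, IsQuantale.sSup_mul_distrib]
    exact iSup₂_le fun _ hu => hu
  · exact fun h => le_sSup h

/-- The universal property of `sup` in the underlying order of `A`. -/
theorem one_le_hom_sup_iff (A : SupCat V) (φ : PSh A) (a : A.carrier) :
    1 ≤ A.hom (A.sup φ) a ↔ ∀ x, φ.1 x ≤ A.hom x a := by
  rw [A.hom_sup, le_iInf_iff]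
  simp only [le_qhom_iff, one_mul]

theorem le_hom_sup (A : SupCat V) (φ : PSh A) (x : A.carrier) :
    φ.1 x ≤ A.hom x (A.sup φ) :=
  (one_le_hom_sup_iff A φ _).1 (A.refl _) x

/-- For a cocontinuous `g : A → V^op` and
`a_g := sup_A(x ↦ ⨆_a g(a) ⊗ A(x,a))`: `e ≤ g(a_g)`, and `a_g` equals the tensor
of `a_g` by `g(a_g)`, i.e. `a_g = sup_A(x ↦ g(a_g) ⊗ A(x, a_g))`. -/
theorem stmt13 (A : SupCat V) (g : A.carrier → V) (hg : GaloisForm A g)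
    (χ : PSh A) (hχ : χ.1 = fun x => ⨆ a, g a * A.hom x a)
    (χ' : PSh A) (hχ' : χ'.1 = fun x => g (A.sup χ) * A.hom x (A.sup χ)) :
    1 ≤ g (A.sup χ) ∧ A.sup χ = A.sup χ' := by
  have h1 : 1 ≤ g (A.sup χ) := by
    rw [hg.2 χ, le_iInf_iff]
    intro x
    rw [le_qhom_iff, one_mul, hχ]
    refine iSup_le fun a => ?_
    rw [mul_comm]
    exact le_qhom_iff.1 (hg.1 x a)
  refine ⟨h1, A.separated _ _ ?_ ?_⟩
  · refine le_trans ?_ (le_hom_sup A χ' (A.sup χ))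
    rw [hχ']
    exact (one_mul (1 : V)).ge.trans (mul_le_mul' h1 (A.refl _))
  · rw [one_le_hom_sup_iff]
    intro x
    refine le_trans ?_ (le_hom_sup A χ x)
    rw [hχ', hχ]
    exact le_iSup (fun a => g a * A.hom x a) (A.sup χ)
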